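/- arXiv:1207.0231 — 8 statements merged into one kernel-verified Lean document; each statement's English description precedes it below -/
import Mathlib

section
/- Let S be a skew lattice and let I be a nonempty subset of S that is closed under ∨. Then the following three conditions are equivalent: (i) for all x ∈ S and y ∈ I, x ⪯ y implies x ∈ I; (ii) for all x ∈ S and y ∈ I, both y∧x ∈ I and x∧y ∈ I; (iii) for all x ∈ S and y ∈ I, x∧y∧x ∈ I. -/
/-!
Both `y ∧ x` and `x ∧ y` lie below `y` in the natural preorder, so a `⪯`-down-closed set absorbs
meets on either side. Absorbing on the left and then on the right gives `x ∧ y ∧ x ∈ I`.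
Finally, `x ⪯ y` says precisely that `x` equals `x ∧ y ∧ x`.
-/

/-- A skew lattice: two associative, idempotent binary operations `join` (∨) and
`meet` (∧) satisfying the four absorption laws. -/
structure SkewLattice (S : Type*) where
  join : S → S → S
  meet : S → S → S
  join_assoc : ∀ x y z : S, join (join x y) z = join x (join y z)
  meet_assoc : ∀ x y z : S, meet (meet x y) z = meet x (meet y z)
  join_idem : ∀ x : S, join x x = x
  meet_idem : ∀ x : S, meet x x = x
  absorb₁ : ∀ x y : S, join (meet y x) x = x
  absorb₂ : ∀ x y : S, join x (meet x y) = x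
  absorb₃ : ∀ x y : S, meet (join y x) x = x
  absorb₄ : ∀ x y : S, meet x (join x y) = x

namespace SkewLattice

variable {S : Type*} (L : SkewLattice S)

/-- The natural preorder: `x ⪯ y` iff `x ∧ y ∧ x = x`. -/
def preceq (x y : S) : Prop := L.meet (L.meet x y) x = x

/-- The natural partial order: `x ≤ y` iff `x ∧ y = x = y ∧ x`. -/
def le (x y : S) : Prop := L.meet x y = x ∧ L.meet y x = x

/-- Strict natural partial order. -/
def lt (x y : S) : Prop := L.le x y ∧ x ≠ y

/-- Green's relation `D`: `x D y` iff `x ∧ y ∧ x = x` and `y ∧ x ∧ y = y`. -/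
def dRel (x y : S) : Prop :=
  L.meet (L.meet x y) x = x ∧ L.meet (L.meet y x) y = y

end SkewLattice

theorem stmt0 {S : Type*} (L : SkewLattice S) (I : Set S) (hne : I.Nonempty)
    (hjoin : ∀ x ∈ I, ∀ y ∈ I, L.join x y ∈ I) :
    List.TFAE
      [∀ x : S, ∀ y ∈ I, L.preceq x y → x ∈ I,
       ∀ x : S, ∀ y ∈ I, L.meet y x ∈ I ∧ L.meet x y ∈ I,
       ∀ x : S, ∀ y ∈ I, L.meet (L.meet x y) x ∈ I] := by
  tfae_have 1 → 2 := by
    intro h x y hy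
    -- `y ∧ x ⪯ y` and `x ∧ y ⪯ y` both reduce to idempotency of `∧`.
    refine ⟨h _ y hy ?_, h _ y hy ?_⟩
    · have e := L.meet_idem (L.meet y x)
      rw [L.meet_assoc] at e
      rw [SkewLattice.preceq, L.meet_assoc, L.meet_assoc, ← L.meet_assoc y y x, L.meet_idem, e]
    · rw [SkewLattice.preceq, L.meet_assoc x y y, L.meet_idem, L.meet_idem]
  tfae_have 2 → 3 := fun h x y hy => (h x _ (h x y hy).2).1
  tfae_have 3 → 1 := by
    intro h x y hy hxy
    have hmem := h x y hy
    rwa [show L.meet (L.meet x y) x = x from hxy] at hmem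
  tfae_finish
end

section
/- Let S be a skew lattice and let F be a nonempty subset of S that is closed under ∧. Then the following three conditions are equivalent: (i) for all x ∈ F and y ∈ S, x ⪯ y implies y ∈ F; (ii) for all x ∈ F and y ∈ S, both y∨x ∈ F and x∨y ∈ F; (iii) for all x ∈ F and y ∈ S, y∨x∨y ∈ F. -/
/-- One direction of the equivalence of the meet and join descriptions of `⪯`.
With `u = y ∧ x`, the hypothesis says `x ∧ u = x`, so absorption gives `x ∨ u = u` and
`y ∨ u = y`. Hence `(y ∨ x) ∨ u = y`, and idempotence of `y ∨ x` gives
`y ∨ x ∨ y = (y ∨ x) ∨ (y ∨ x) ∨ u = y`. -/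
theorem SkewLattice.join_join_eq_of_preceq {S : Type*} (L : SkewLattice S) {x y : S}
    (h : L.preceq x y) : L.join (L.join y x) y = y := by
  have hx : L.meet x (L.meet y x) = x := by rw [← L.meet_assoc]; exact h
  have hu : L.join x (L.meet y x) = L.meet y x := by
    have := L.absorb₁ (L.meet y x) x
    rwa [hx] at this
  have hy : L.join (L.join y x) (L.meet y x) = y := by
    rw [L.join_assoc, hu, L.absorb₂]
  calc L.join (L.join y x) y
      = L.join (L.join y x) (L.join (L.join y x) (L.meet y x)) := by rw [hy]
    _ = y := by rw [← L.join_assoc, L.join_idem, hy]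

theorem stmt1 {S : Type*} (L : SkewLattice S) (F : Set S) (hne : F.Nonempty)
    (hmeet : ∀ x ∈ F, ∀ y ∈ F, L.meet x y ∈ F) :
    List.TFAE
      [∀ x ∈ F, ∀ y : S, L.preceq x y → y ∈ F,
       ∀ x ∈ F, ∀ y : S, L.join y x ∈ F ∧ L.join x y ∈ F,
       ∀ x ∈ F, ∀ y : S, L.join (L.join y x) y ∈ F] := by
  tfae_have 1 → 2 := by
    -- Absorption gives `x ⪯ y ∨ x` and `x ⪯ x ∨ y`.
    intro h x hx y
    constructor
    · apply h x hx
      rw [SkewLattice.preceq, L.meet_assoc, L.absorb₃, L.meet_idem]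
    · apply h x hx
      rw [SkewLattice.preceq, L.absorb₄, L.meet_idem]
  tfae_have 2 → 3 := fun h x hx y => (h _ (h x hx y).1 y).2
  tfae_have 3 → 1 := fun h x hx y hxy => L.join_join_eq_of_preceq hxy ▸ h x hx y
  tfae_finish
end

section
/- Let S be a skew lattice and I a nonempty subset of S. Then I is an ideal of S if and only if for all a, b ∈ S: (a ∈ I and b ∈ I) if and only if a∨b∨a ∈ I. Analogously, a nonempty subset F of S is a filter of S if and only if for all a, b ∈ S: (a ∈ F and b ∈ F) if and only if a∧b∧a ∈ F. -/
/-- An ideal: nonempty, closed under `∨`, and downward closed for `⪯`. -/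
def SkewLattice.IsIdeal {S : Type*} (L : SkewLattice S) (I : Set S) : Prop :=
  I.Nonempty ∧ (∀ x ∈ I, ∀ y ∈ I, L.join x y ∈ I) ∧
    ∀ x : S, ∀ y ∈ I, L.preceq x y → x ∈ I

/-- A filter: nonempty, closed under `∧`, and upward closed for `⪯`. -/
def SkewLattice.IsFilter {S : Type*} (L : SkewLattice S) (F : Set S) : Prop :=
  F.Nonempty ∧ (∀ x ∈ F, ∀ y ∈ F, L.meet x y ∈ F) ∧
    ∀ x ∈ F, ∀ y : S, L.preceq x y → y ∈ F

namespace SkewLattice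

/-- The dual skew lattice, with `∨` and `∧` interchanged. -/
def dual {S : Type*} (L : SkewLattice S) : SkewLattice S where
  join := L.meet
  meet := L.join
  join_assoc := L.meet_assoc
  meet_assoc := L.join_assoc
  join_idem := L.meet_idem
  meet_idem := L.join_idem
  absorb₁ := L.absorb₃
  absorb₂ := L.absorb₄
  absorb₃ := L.absorb₁
  absorb₄ := L.absorb₂

theorem join_join_eq_of_preceq_s2 {S : Type*} (L : SkewLattice S) {x y : S}
    (h : L.preceq x y) : L.join (L.join y x) y = y := by
  unfold preceq at h
  rw [L.meet_assoc] at h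
  -- With `u = y ∧ x`, the hypothesis reads `x ∧ u = x`, whence `x ∨ u = u`.
  have hu : L.join x (L.meet y x) = L.meet y x := by
    have := L.absorb₁ (L.meet y x) x
    rwa [h] at this
  have hy : L.join (L.join y x) (L.meet y x) = y := by
    rw [L.join_assoc, hu, L.absorb₂]
  -- `y` is a right multiple of `y ∨ x`, so idempotence absorbs `y ∨ x` on the left.
  calc L.join (L.join y x) y
      = L.join (L.join y x) (L.join (L.join y x) (L.meet y x)) := by rw [hy]
    _ = y := by rw [← L.join_assoc, L.join_idem, hy]

theorem preceq_iff {S : Type*} (L : SkewLattice S) (x y : S) :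
    L.preceq x y ↔ L.join (L.join y x) y = y :=
  ⟨L.join_join_eq_of_preceq_s2, fun h => L.dual.join_join_eq_of_preceq_s2 (x := y) (y := x) h⟩

theorem dual_preceq {S : Type*} (L : SkewLattice S) (x y : S) :
    L.dual.preceq x y ↔ L.preceq y x :=
  (L.preceq_iff y x).symm

theorem isIdeal_iff {S : Type*} (L : SkewLattice S) (I : Set S) (hI : I.Nonempty) :
    L.IsIdeal I ↔ ∀ a b : S, (a ∈ I ∧ b ∈ I) ↔ L.join (L.join a b) a ∈ I := by
  have idem_left : ∀ x y : S, L.join x (L.join x y) = L.join x y := fun x y => by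
    rw [← L.join_assoc, L.join_idem]
  constructor
  · rintro ⟨-, hjoin, hdown⟩ a b
    refine ⟨fun h => hjoin _ (hjoin _ h.1 _ h.2) _ h.1, fun h => ⟨?_, ?_⟩⟩
    · refine hdown _ _ h ((L.preceq_iff _ _).2 ?_)
      have := L.join_idem (L.join (L.join a b) a)
      simp only [L.join_assoc, L.join_idem, idem_left] at this ⊢
      exact this
    · refine hdown _ _ h ((L.preceq_iff _ _).2 ?_)
      have hab := idem_left (L.join a b)
      simp only [L.join_assoc] at hab ⊢
      rw [hab, hab]
  · intro h
    refine ⟨hI, fun a ha b hb => ?_, fun x y hy hxy => ?_⟩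
    · have hab := (h a b).1 ⟨ha, hb⟩
      refine ((h a (L.join a b)).2 ?_).2
      rwa [idem_left]
    · refine ((h y x).2 ?_).2
      rwa [(L.preceq_iff x y).1 hxy]

theorem isFilter_iff_dual_isIdeal {S : Type*} (L : SkewLattice S) (F : Set S) :
    L.IsFilter F ↔ L.dual.IsIdeal F := by
  simp only [IsFilter, IsIdeal, dual_preceq]
  exact and_congr_right fun _ => and_congr_right fun _ =>
    ⟨fun h x y hy => h y hy x, fun h x hx y => h y x hx⟩

end SkewLattice

theorem stmt2 {S : Type*} (L : SkewLattice S) (I F : Set S)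
    (hI : I.Nonempty) (hF : F.Nonempty) :
    (L.IsIdeal I ↔ ∀ a b : S, (a ∈ I ∧ b ∈ I) ↔ L.join (L.join a b) a ∈ I) ∧
    (L.IsFilter F ↔ ∀ a b : S, (a ∈ F ∧ b ∈ F) ↔ L.meet (L.meet a b) a ∈ F) := by
  exact ⟨L.isIdeal_iff I hI, (L.isFilter_iff_dual_isIdeal F).trans (L.dual.isIdeal_iff F hF)⟩
end

section
/- Let S be a skew lattice and x ∈ S. Then the set x∧S∧x = {x∧a∧x : a ∈ S} equals {y ∈ S : y ≤ x}, and this set is the smallest skew ideal of S containing x (it is a skew ideal containing x and is contained in every skew ideal of S containing x). Dually, x∨S∨x = {x∨a∨x : a ∈ S} equals {y ∈ S : x ≤ y}, and this set is the smallest skew filter of S containing x. -/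
/-- A skew ideal: nonempty, closed under `∨`, and downward closed for `≤`. -/
def SkewLattice.IsSkewIdeal {S : Type*} (L : SkewLattice S) (I : Set S) : Prop :=
  I.Nonempty ∧ (∀ x ∈ I, ∀ y ∈ I, L.join x y ∈ I) ∧
    ∀ x : S, ∀ y ∈ I, L.le x y → x ∈ I

/-- A skew filter: nonempty, closed under `∧`, and upward closed for `≤`. -/
def SkewLattice.IsSkewFilter {S : Type*} (L : SkewLattice S) (F : Set S) : Prop :=
  F.Nonempty ∧ (∀ x ∈ F, ∀ y ∈ F, L.meet x y ∈ F) ∧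
    ∀ x : S, ∀ y ∈ F, L.le y x → x ∈ F

namespace SkewLattice

theorem le_iff_join {S : Type*} (L : SkewLattice S) (x y : S) :
    L.le x y ↔ L.join x y = y ∧ L.join y x = y := by
  constructor
  · rintro ⟨h₁, h₂⟩
    have a := L.absorb₁ y x
    have b := L.absorb₂ y x
    rw [h₁] at a
    rw [h₂] at b
    exact ⟨a, b⟩
  · rintro ⟨h₁, h₂⟩
    have a := L.absorb₄ x y
    have b := L.absorb₃ x y
    rw [h₁] at a
    rw [h₂] at b
    exact ⟨a, b⟩

theorem dual_le {S : Type*} (L : SkewLattice S) (x y : S) : L.dual.le y x ↔ L.le x y :=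
  and_comm.trans (L.le_iff_join x y).symm

theorem le_refl {S : Type*} (L : SkewLattice S) (x : S) : L.le x x :=
  ⟨L.meet_idem x, L.meet_idem x⟩

theorem le_trans {S : Type*} (L : SkewLattice S) {x y z : S} (h : L.le x y) (k : L.le y z) :
    L.le x z := by
  constructor
  · rw [← h.1, L.meet_assoc, k.1]
  · rw [← h.2, ← L.meet_assoc, k.2]

theorem join_le {S : Type*} (L : SkewLattice S) {x y z : S} (h : L.le x z) (k : L.le y z) :
    L.le (L.join x y) z := by
  rw [le_iff_join] at *
  constructor
  · rw [L.join_assoc, k.1, h.1]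
  · rw [← L.join_assoc, h.2, k.2]

theorem setOf_meet_meet {S : Type*} (L : SkewLattice S) (x : S) :
    {z : S | ∃ a : S, L.meet (L.meet x a) x = z} = {y : S | L.le y x} := by
  ext z
  constructor
  · rintro ⟨a, rfl⟩
    constructor
    · rw [L.meet_assoc, L.meet_idem]
    · rw [← L.meet_assoc, ← L.meet_assoc, L.meet_idem]
  · rintro ⟨h₁, h₂⟩
    exact ⟨z, by rw [h₂, h₁]⟩

theorem isSkewIdeal_setOf_le {S : Type*} (L : SkewLattice S) (x : S) :
    L.IsSkewIdeal {y : S | L.le y x} :=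
  ⟨⟨x, L.le_refl x⟩, fun _ h _ k => L.join_le h k, fun _ _ k h => L.le_trans h k⟩

end SkewLattice

theorem stmt10 {S : Type*} (L : SkewLattice S) (x : S) :
    ({z : S | ∃ a : S, L.meet (L.meet x a) x = z} = {y : S | L.le y x} ∧
     L.IsSkewIdeal {y : S | L.le y x} ∧ x ∈ {y : S | L.le y x} ∧
     (∀ J : Set S, L.IsSkewIdeal J → x ∈ J → {y : S | L.le y x} ⊆ J)) ∧
    ({z : S | ∃ a : S, L.join (L.join x a) x = z} = {y : S | L.le x y} ∧
     L.IsSkewFilter {y : S | L.le x y} ∧ x ∈ {y : S | L.le x y} ∧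
     (∀ G : Set S, L.IsSkewFilter G → x ∈ G → {y : S | L.le x y} ⊆ G)) := by
  have hd : {y : S | L.dual.le y x} = {y : S | L.le x y} := Set.ext fun y => L.dual_le x y
  refine ⟨⟨L.setOf_meet_meet x, L.isSkewIdeal_setOf_le x, L.le_refl x,
    fun J hJ hx y hy => hJ.2.2 y x hx hy⟩, ?_, ?_, L.le_refl x,
    fun G hG hx y hy => hG.2.2 y x hx hy⟩
  · exact (L.dual.setOf_meet_meet x).trans hd
  -- Nonemptiness and closure under `∧` are those of the dual ideal; upward closure is transitivity.
  · have h := L.dual.isSkewIdeal_setOf_le x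
    rw [hd] at h
    exact ⟨h.1, h.2.1, fun _ _ k h => L.le_trans k h⟩
end

section
/- Let S be a skew lattice and x ∈ S. Then the principal ideal of x is the union of the principal skew ideals of the elements of the D-class of x: {z ∈ S : z ⪯ x} = ⋃ { {z ∈ S : z ≤ y} : y ∈ S, y D x }. -/
namespace SkewLattice

/-- With `c = b ∧ a`, absorption gives `b ∨ c = b` and `a ∨ c = c`, so `b = b ∨ a ∨ c`, and
idempotence of `b ∨ a` finishes. -/
theorem join_of_meet {S : Type*} (L : SkewLattice S) {a b : S}
    (h : L.meet (L.meet a b) a = a) : L.join (L.join b a) b = b := by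
  have hbc : L.join b (L.meet b a) = b := L.absorb₂ b a
  have hac : L.join a (L.meet b a) = L.meet b a := by
    have h1 := L.absorb₁ (L.meet b a) a
    rwa [← L.meet_assoc, h] at h1
  have hb : L.join (L.join b a) (L.meet b a) = b := by
    rw [L.join_assoc, hac, hbc]
  calc L.join (L.join b a) b
      = L.join (L.join b a) (L.join (L.join b a) (L.meet b a)) := by rw [hb]
    _ = b := by rw [← L.join_assoc, L.join_idem, hb]

theorem meet_of_join {S : Type*} (L : SkewLattice S) {a b : S}
    (h : L.join (L.join b a) b = b) : L.meet (L.meet a b) a = a :=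
  L.dual.join_of_meet h

end SkewLattice

theorem stmt14 {S : Type*} (L : SkewLattice S) (x : S) :
    {z : S | L.preceq z x} = ⋃ y ∈ {y : S | L.dRel y x}, {z : S | L.le z y} := by
  ext z
  simp only [Set.mem_setOf_eq, Set.mem_iUnion, exists_prop]
  constructor
  · intro hz
    have hx : L.join (L.join x z) x = x := L.join_of_meet hz
    refine ⟨L.join (L.join z x) z, ⟨L.meet_of_join ?_, L.meet_of_join ?_⟩, ?_, ?_⟩
    · calc L.join (L.join x (L.join (L.join z x) z)) x
          = L.join (L.join (L.join x z) x) (L.join z x) := by simp only [L.join_assoc]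
        _ = x := by rw [hx, ← L.join_assoc, hx]
    · calc L.join (L.join (L.join (L.join z x) z) x) (L.join (L.join z x) z)
          = L.join (L.join (L.join z x) (L.join z x)) (L.join (L.join z x) z) := by
            simp only [L.join_assoc]
        _ = L.join (L.join z x) z := by
            rw [L.join_idem, ← L.join_assoc, L.join_idem]
    · rw [L.join_assoc]
      exact L.absorb₄ z _
    · exact L.absorb₃ z _
  · rintro ⟨y, ⟨hyx, hxy⟩, hzy, hyz⟩
    have h1 : L.meet z (L.meet x y) = z := by
      calc L.meet z (L.meet x y) = L.meet (L.meet z y) (L.meet x y) := by rw [hzy]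
        _ = L.meet z (L.meet (L.meet y x) y) := by simp only [L.meet_assoc]
        _ = z := by rw [hyx, hzy]
    have h2 : L.meet (L.meet y x) z = z := by
      calc L.meet (L.meet y x) z = L.meet (L.meet y x) (L.meet y z) := by rw [hyz]
        _ = L.meet (L.meet (L.meet y x) y) z := by simp only [L.meet_assoc]
        _ = z := by rw [hyx, hyz]
    change L.meet (L.meet z x) z = z
    calc L.meet (L.meet z x) z
        = L.meet (L.meet z (L.meet (L.meet x y) x)) z := by rw [hxy]
      _ = L.meet (L.meet z (L.meet x y)) (L.meet x z) := by simp only [L.meet_assoc]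
      _ = L.meet (L.meet z y) (L.meet x z) := by rw [h1, hzy]
      _ = L.meet z (L.meet (L.meet y x) z) := by simp only [L.meet_assoc]
      _ = z := by rw [h2, L.meet_idem]
end

section
/- Let S be a skew lattice and x, y ∈ S with x D y. Then the map a ↦ y∧a∧y is a bijection from {z ∈ S : z ≤ x} onto {z ∈ S : z ≤ y}, with inverse b ↦ x∧b∧x. In particular, the principal skew ideals of D-related elements have equal cardinality. -/
theorem SkewLattice.sandwich_le {S : Type*} (L : SkewLattice S) (y a : S) :
    L.le (L.meet (L.meet y a) y) y := by
  constructor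
  · rw [L.meet_assoc, L.meet_idem]
  · rw [← L.meet_assoc, ← L.meet_assoc, L.meet_idem]

theorem SkewLattice.sandwich_sandwich {S : Type*} (L : SkewLattice S) {x y a : S}
    (h : L.meet (L.meet x y) x = x) (ha : L.le a x) :
    L.meet (L.meet x (L.meet (L.meet y a) y)) x = a := by
  obtain ⟨hax, hxa⟩ := ha
  have hl : L.meet (L.meet x y) a = a := by
    calc L.meet (L.meet x y) a = L.meet (L.meet x y) (L.meet x a) := by rw [hxa]
      _ = a := by rw [← L.meet_assoc, h, hxa]
  have hr : L.meet a (L.meet y x) = a := by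
    calc L.meet a (L.meet y x) = L.meet (L.meet a x) (L.meet y x) := by rw [hax]
      _ = L.meet a (L.meet (L.meet x y) x) := by simp only [L.meet_assoc]
      _ = a := by rw [h, hax]
  calc L.meet (L.meet x (L.meet (L.meet y a) y)) x
      = L.meet (L.meet (L.meet x y) a) (L.meet y x) := by simp only [L.meet_assoc]
    _ = a := by rw [hl, hr]

theorem stmt15 {S : Type*} (L : SkewLattice S) (x y : S) (hxy : L.dRel x y) :
    Set.BijOn (fun a => L.meet (L.meet y a) y) {z : S | L.le z x} {z : S | L.le z y} ∧
    Set.InvOn (fun b => L.meet (L.meet x b) x) (fun a => L.meet (L.meet y a) y)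
      {z : S | L.le z x} {z : S | L.le z y} ∧
    Cardinal.mk {z : S | L.le z x} = Cardinal.mk {z : S | L.le z y} := by
  have hinv : Set.InvOn (fun b => L.meet (L.meet x b) x) (fun a => L.meet (L.meet y a) y)
      {z : S | L.le z x} {z : S | L.le z y} :=
    ⟨fun _ ha => L.sandwich_sandwich hxy.1 ha, fun _ hb => L.sandwich_sandwich hxy.2 hb⟩
  have hbij := hinv.bijOn (fun a _ => L.sandwich_le y a) (fun b _ => L.sandwich_le x b)
  exact ⟨hbij, hinv, Cardinal.mk_congr (hbij.equiv _)⟩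
end

section
/- Let S be a primitive skew lattice with D-classes A > B, i.e., S = A ∪ B where A and B are the (disjoint, nonempty) D-classes of S and b ⪯ a holds for all a ∈ A and b ∈ B. Then for all a ∈ A and b ∈ B: {y ∈ S : y ≤ a} = {a∧c∧a : c ∈ B} ∪ {a} and {y ∈ S : b ≤ y} = {b∨c∨b : c ∈ A} ∪ {b}. -/
theorem stmt18 {S : Type*} (L : SkewLattice S) (A B : Set S)
    (hAne : A.Nonempty) (hBne : B.Nonempty)
    (hdisj : A ∩ B = ∅) (hcover : A ∪ B = Set.univ)
    (hAclass : ∀ a ∈ A, ∀ z : S, (z ∈ A ↔ L.dRel z a))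
    (hBclass : ∀ b ∈ B, ∀ z : S, (z ∈ B ↔ L.dRel z b))
    (hord : ∀ a ∈ A, ∀ b ∈ B, L.preceq b a) :
    ∀ a ∈ A, ∀ b ∈ B,
      ({y : S | L.le y a} = {w : S | ∃ c ∈ B, w = L.meet (L.meet a c) a} ∪ {a}) ∧
      ({y : S | L.le b y} = {w : S | ∃ c ∈ A, w = L.join (L.join b c) b} ∪ {b}) := by
  intro a ha b hb
  have hAB : ∀ y : S, y ∈ A ∨ y ∈ B := fun y => by
    have h : y ∈ A ∪ B := hcover ▸ Set.mem_univ y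
    exact h
  constructor
  · ext y
    constructor
    · rintro ⟨h₁, h₂⟩
      rcases hAB y with hy | hy
      · -- Comparable elements of one `D`-class coincide: `a = a ∧ y ∧ a = y`.
        have h := ((hAclass a ha y).1 hy).2
        rw [h₂, h₁] at h
        exact Or.inr h
      · exact Or.inl ⟨y, hy, by rw [h₂, h₁]⟩
    · rintro (⟨c, -, rfl⟩ | rfl)
      · exact ⟨by rw [L.meet_assoc, L.meet_idem],
          by rw [← L.meet_assoc, ← L.meet_assoc, L.meet_idem]⟩
      · exact ⟨L.meet_idem _, L.meet_idem _⟩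
  · ext y
    constructor
    · rintro ⟨h₁, h₂⟩
      rcases hAB y with hy | hy
      · -- Absorption turns `b ∧ y = b = y ∧ b` into `b ∨ y = y = y ∨ b`.
        have h₃ : L.join b y = y := by
          have h := L.absorb₁ y b
          rwa [h₁] at h
        have h₄ : L.join y b = y := by
          have h := L.absorb₂ y b
          rwa [h₂] at h
        exact Or.inl ⟨y, hy, by rw [h₃, h₄]⟩
      · -- Comparable elements of one `D`-class coincide: `y = y ∧ b ∧ y = b`.
        have h := ((hBclass b hb y).1 hy).1
        rw [h₂, h₁] at h
        exact Or.inr h.symm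
    · rintro (⟨c, -, rfl⟩ | rfl)
      · exact ⟨by rw [L.join_assoc, L.absorb₄], L.absorb₃ _ _⟩
      · exact ⟨L.meet_idem _, L.meet_idem _⟩
end

section
/- Let S be a finite skew lattice and x ∈ S. Define subsets x↓*_n of S recursively by: x↓*_0 = {x}, and x↓*_{n+1} = ⋃ { z ∧ D_y ∧ z : z ∈ x↓*_n and y ⊲ z }, where z ∧ D_y ∧ z = {z∧w∧z : w ∈ S, w D y} and y ⊲ z means y < z and there is no w ∈ S with y < w < z. Then the principal skew ideal of x is the union of these sets: {v ∈ S : v ≤ x} = ⋃_{n ∈ ℕ} x↓*_n. -/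
/-- The covering relation: `y ⊲ z` iff `y < z` and nothing lies strictly between. -/
def SkewLattice.covers {S : Type*} (L : SkewLattice S) (y z : S) : Prop :=
  L.lt y z ∧ ¬ ∃ w : S, L.lt y w ∧ L.lt w z

/-- The recursively defined sets `x↓*_n`. -/
def SkewLattice.downSeq {S : Type*} (L : SkewLattice S) (x : S) : ℕ → Set S
  | 0 => {x}
  | n + 1 =>
    ⋃ z ∈ L.downSeq x n, ⋃ y ∈ {y : S | L.covers y z},
      {v : S | ∃ w : S, L.dRel w y ∧ v = L.meet (L.meet z w) z}

namespace SkewLattice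

variable {S : Type*} (L : SkewLattice S)

theorem le_trans' {a b c : S} (hab : L.le a b) (hbc : L.le b c) : L.le a c := by
  constructor
  · rw [← hab.1, L.meet_assoc, hbc.1]
  · rw [← hab.2, ← L.meet_assoc, hbc.2]

/-- The natural partial order of a skew lattice, as a Mathlib partial order. -/
abbrev toPartialOrder : PartialOrder S where
  le := L.le
  le_refl a := ⟨L.meet_idem a, L.meet_idem a⟩
  le_trans _ _ _ := L.le_trans'
  le_antisymm _ _ hab hba := hab.1.symm.trans hba.2

theorem meet_meet_le (z w : S) : L.le (L.meet (L.meet z w) z) z :=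
  ⟨by rw [L.meet_assoc, L.meet_idem], by rw [← L.meet_assoc, ← L.meet_assoc, L.meet_idem]⟩

theorem dRel_refl (y : S) : L.dRel y y := by
  simp [dRel, L.meet_idem]

theorem mem_downSeq_succ {x v : S} {n : ℕ} :
    v ∈ L.downSeq x (n + 1) ↔ ∃ z ∈ L.downSeq x n, ∃ y, L.covers y z ∧
      ∃ w, L.dRel w y ∧ v = L.meet (L.meet z w) z := by
  simp [downSeq]

theorem le_of_mem_downSeq {x : S} (n : ℕ) : ∀ v ∈ L.downSeq x n, L.le v x := by
  induction n with
  | zero =>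
    rintro v rfl
    exact ⟨L.meet_idem v, L.meet_idem v⟩
  | succ n ih =>
    intro v hv
    obtain ⟨z, hz, -, -, w, -, rfl⟩ := L.mem_downSeq_succ.1 hv
    exact L.le_trans' (L.meet_meet_le z w) (ih z hz)

theorem mem_downSeq_of_covers {x y z : S} {n : ℕ} (hz : z ∈ L.downSeq x n)
    (h : L.covers y z) : y ∈ L.downSeq x (n + 1) :=
  L.mem_downSeq_succ.2 ⟨z, hz, y, h, y, L.dRel_refl y, by rw [h.1.1.2, h.1.1.1]⟩

/-- In a finite skew lattice every strict inequality refines to a cover of its upper end. -/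
theorem exists_le_covers [Finite S] {v z : S} (h : L.lt v z) :
    ∃ y, L.le v y ∧ L.covers y z := by
  let _ := L.toPartialOrder
  have hvz : v < z := lt_of_le_of_ne (show v ≤ z from h.1) h.2
  obtain ⟨y, hvy, hy⟩ := exists_le_covBy_of_lt hvz
  exact ⟨y, hvy, ⟨hy.lt.le, hy.lt.ne⟩, fun ⟨w, hyw, hwz⟩ =>
    hy.2 (lt_of_le_of_ne (show y ≤ w from hyw.1) hyw.2)
      (lt_of_le_of_ne (show w ≤ z from hwz.1) hwz.2)⟩

/-- Everything below a member of some `x↓*_n` lies in some `x↓*_m`. -/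
theorem exists_mem_downSeq_of_le [Finite S] {x v : S} (z : S) :
    ∀ n, z ∈ L.downSeq x n → L.le v z → ∃ m, v ∈ L.downSeq x m := by
  let _ := L.toPartialOrder
  induction z using WellFoundedLT.induction with
  | ind z ih =>
    intro n hz hvz
    by_cases hne : v = z
    · exact ⟨n, hne ▸ hz⟩
    · obtain ⟨y, hvy, hy⟩ := L.exists_le_covers ⟨hvz, hne⟩
      exact ih y (lt_of_le_of_ne (show y ≤ z from hy.1.1) hy.1.2) (n + 1)
        (L.mem_downSeq_of_covers hz hy) hvy

end SkewLattice

theorem stmt19 {S : Type*} [Finite S] (L : SkewLattice S) (x : S) :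
    {v : S | L.le v x} = ⋃ n : ℕ, L.downSeq x n := by
  ext v
  simp only [Set.mem_ofPred_eq, Set.mem_iUnion]
  exact ⟨L.exists_mem_downSeq_of_le x 0 rfl, fun ⟨n, hn⟩ => L.le_of_mem_downSeq n v hn⟩
end
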